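/- Let A satisfy (H1), β_i ∈ (-2,0] for all i ∈ I with not all β_i equal to 0, and let u be a solution of the singular Liouville system. For λ > 0 define Σ_λ = {x ∈ ℝ² : x₁ > λ}, u_i^λ(x₁,x₂) = u_i(2λ−x₁, x₂), w_i^λ = u_i^λ − u_i on Σ_λ, f(x) = log log(|x|+3), and z_i^λ = w_i^λ / f. Then there exists R > 0 independent of λ such that for every λ > 0, if x₀ ∈ Σ_λ is a point where a negative minimum of min{z_1^λ,...,z_n^λ} over Σ_λ is attained, then |x₀| < R. -/

import Mathlib

open Set MeasureTheory

/-- Hypothesis (H1): symmetric, nonnegative entries, irreducible, invertible. -/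
def H1 {n : ℕ} (A : Matrix (Fin n) (Fin n) ℝ) : Prop :=
  A.IsSymm ∧ (∀ i j, 0 ≤ A i j) ∧
  (∀ S : Finset (Fin n), S.Nonempty → S ≠ Finset.univ → ∃ i ∈ S, ∃ j ∈ Sᶜ, A i j ≠ 0) ∧
  IsUnit A.det

/-- The Euclidean norm on ℝ². -/
noncomputable def nrm (x : ℝ × ℝ) : ℝ := Real.sqrt (x.1 ^ 2 + x.2 ^ 2)

/-- The Laplacian on ℝ²: sum of the two second partial derivatives. -/
noncomputable def lap (u : ℝ × ℝ → ℝ) (x : ℝ × ℝ) : ℝ :=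
  deriv (deriv (fun s => u (s, x.2))) x.1 + deriv (deriv (fun t => u (x.1, t))) x.2

/-- Solution (not necessarily radial) of the singular Liouville system on ℝ²
with the finite-energy condition. -/
def PDESolution {n : ℕ} (A : Matrix (Fin n) (Fin n) ℝ) (β : Fin n → ℝ)
    (u : Fin n → ℝ × ℝ → ℝ) : Prop :=
  (∀ i, Continuous (u i)) ∧
  (∀ i, ∀ x : ℝ × ℝ, x ≠ 0 → ContDiffAt ℝ 2 (u i) x) ∧
  (∀ i, ∀ x : ℝ × ℝ, x ≠ 0 →
      lap (u i) x + ∑ j, A i j * nrm x ^ β j * Real.exp (u j x) = 0) ∧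
  (∀ i, Integrable (fun x : ℝ × ℝ => nrm x ^ β i * Real.exp (u i x)))


open scoped Topology

theorem curve2 {u : ℝ × ℝ → ℝ} {γ γ' : ℝ → ℝ × ℝ} {γ'' : ℝ × ℝ} {s : ℝ}
    (hu : ContDiffAt ℝ 2 u (γ s)) (h1 : ∀ r, HasDerivAt γ (γ' r) r)
    (h2 : HasDerivAt γ' γ'' s) :
    HasDerivAt (deriv (fun r => u (γ r)))
      (fderiv ℝ (fderiv ℝ u) (γ s) (γ' s) (γ' s) + fderiv ℝ u (γ s) γ'') s := by
  have hev : ∀ᶠ x in 𝓝 (γ s), ContDiffAt ℝ 2 u x := hu.eventually (by simp)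
  have hev2 : ∀ᶠ r in 𝓝 s, ContDiffAt ℝ 2 u (γ r) :=
    (h1 s).continuousAt.eventually hev
  have e1 : deriv (fun r => u (γ r)) =ᶠ[𝓝 s] fun r => fderiv ℝ u (γ r) (γ' r) := by
    filter_upwards [hev2] with r hr
    exact ((hr.differentiableAt (by simp)).hasFDerivAt.comp_hasDerivAt r (h1 r)).deriv
  have hd : HasFDerivAt (fderiv ℝ u) (fderiv ℝ (fderiv ℝ u) (γ s)) (γ s) :=
    ((hu.fderiv_right (m := 1) (by norm_num)).differentiableAt (by simp)).hasFDerivAt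
  have hd2 := hd.comp_hasDerivAt s (h1 s)
  exact (hd2.clm_apply h2).congr_of_eventuallyEq e1

theorem lap_eq {u : ℝ × ℝ → ℝ} {x : ℝ × ℝ} (hu : ContDiffAt ℝ 2 u x) :
    lap u x = fderiv ℝ (fderiv ℝ u) x (1, 0) (1, 0) + fderiv ℝ (fderiv ℝ u) x (0, 1) (0, 1) := by
  have a := curve2 (u := u) (γ := fun s => (s, x.2)) (γ' := fun _ => (1, 0)) (γ'' := 0) (s := x.1) hu
    (fun r => (hasDerivAt_id r).prodMk (hasDerivAt_const r x.2)) (hasDerivAt_const _ _)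
  have b := curve2 (u := u) (γ := fun s => (x.1, s)) (γ' := fun _ => (0, 1)) (γ'' := 0) (s := x.2) hu
    (fun r => (hasDerivAt_const r x.1).prodMk (hasDerivAt_id r)) (hasDerivAt_const _ _)
  unfold lap
  rw [a.deriv, b.deriv]
  simp

/-- log-polar coordinates around c -/
noncomputable def pol (c q : ℝ × ℝ) : ℝ × ℝ :=
  (c.1 + Real.exp q.1 * Real.cos q.2, c.2 + Real.exp q.1 * Real.sin q.2)

theorem contDiff_pol (c : ℝ × ℝ) {k : ℕ∞} : ContDiff ℝ k (pol c) := by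
  unfold pol
  fun_prop

theorem bil_rot (B : ℝ × ℝ →L[ℝ] ℝ × ℝ →L[ℝ] ℝ) (a b : ℝ) :
    B (a, b) (a, b) + B (-b, a) (-b, a) = (a ^ 2 + b ^ 2) * (B (1, 0) (1, 0) + B (0, 1) (0, 1)) := by
  have h : ∀ a b : ℝ, ((a, b) : ℝ × ℝ) = a • ((1, 0) : ℝ × ℝ) + b • ((0, 1) : ℝ × ℝ) := by
    intro a b; simp
  rw [h a b, h (-b) a]
  simp only [map_add, map_smul, add_apply, smul_apply,
    smul_eq_mul]
  ring

theorem lap_pol {u : ℝ × ℝ → ℝ} {c q : ℝ × ℝ} (hu : ContDiffAt ℝ 2 u (pol c q)) :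
    lap (fun p => u (pol c p)) q = Real.exp (2 * q.1) * lap u (pol c q) := by
  have a := curve2 (u := u) (γ := fun s => pol c (s, q.2))
    (γ' := fun s => (Real.exp s * Real.cos q.2, Real.exp s * Real.sin q.2))
    (γ'' := (Real.exp q.1 * Real.cos q.2, Real.exp q.1 * Real.sin q.2)) (s := q.1) hu
    (fun r => by
      simp only [pol]
      exact (((Real.hasDerivAt_exp r).mul_const _).const_add _).prodMk
        (((Real.hasDerivAt_exp r).mul_const _).const_add _))
    (((Real.hasDerivAt_exp _).mul_const _).prodMk ((Real.hasDerivAt_exp _).mul_const _))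
  have b := curve2 (u := u) (γ := fun s => pol c (q.1, s))
    (γ' := fun s => (Real.exp q.1 * -Real.sin s, Real.exp q.1 * Real.cos s))
    (γ'' := (Real.exp q.1 * -Real.cos q.2, Real.exp q.1 * -Real.sin q.2)) (s := q.2) hu
    (fun r => by
      simp only [pol]
      exact (((Real.hasDerivAt_cos r).const_mul _).const_add _).prodMk
        (((Real.hasDerivAt_sin r).const_mul _).const_add _))
    (((Real.hasDerivAt_sin _).neg.const_mul _).prodMk ((Real.hasDerivAt_cos _).const_mul _))
  rw [lap_eq hu]
  unfold lap
  rw [a.deriv, b.deriv]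
  have hneg : ((Real.exp q.1 * -Real.cos q.2, Real.exp q.1 * -Real.sin q.2) : ℝ × ℝ)
    = - (Real.exp q.1 * Real.cos q.2, Real.exp q.1 * Real.sin q.2) := by
    ext <;> simp
  have h := bil_rot (fderiv ℝ (fderiv ℝ u) (pol c q)) (Real.exp q.1 * Real.cos q.2)
    (Real.exp q.1 * Real.sin q.2)
  have hs : (Real.exp q.1 * Real.cos q.2) ^ 2 + (Real.exp q.1 * Real.sin q.2) ^ 2
      = Real.exp (2 * q.1) := by
    rw [two_mul, Real.exp_add]
    linear_combination (Real.exp q.1) ^ 2 * Real.sin_sq_add_cos_sq q.2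
  rw [hs] at h
  rw [hneg, map_neg, ← h, mul_neg]
  simp only [Prod.mk.eta]
  ring

theorem slice1 {u : ℝ × ℝ → ℝ} {x : ℝ × ℝ} (hu : ContDiffAt ℝ 2 u x) :
    ContDiffAt ℝ 2 (fun s => u (s, x.2)) x.1 :=
  ContDiffAt.comp (f := fun s : ℝ => (s, x.2)) x.1 hu (by fun_prop)

theorem slice2 {u : ℝ × ℝ → ℝ} {x : ℝ × ℝ} (hu : ContDiffAt ℝ 2 u x) :
    ContDiffAt ℝ 2 (fun s => u (x.1, s)) x.2 :=
  ContDiffAt.comp (f := fun s : ℝ => (x.1, s)) x.2 hu (by fun_prop)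

theorem lap_iter (u : ℝ × ℝ → ℝ) (x : ℝ × ℝ) :
    lap u x = iteratedDeriv 2 (fun s => u (s, x.2)) x.1 + iteratedDeriv 2 (fun s => u (x.1, s)) x.2 := by
  simp [lap, iteratedDeriv_succ, iteratedDeriv_zero]

theorem lap_add {u v : ℝ × ℝ → ℝ} {x : ℝ × ℝ} (hu : ContDiffAt ℝ 2 u x) (hv : ContDiffAt ℝ 2 v x) :
    lap (fun y => u y + v y) x = lap u x + lap v x := by
  simp only [lap_iter]
  rw [iteratedDeriv_fun_add (slice1 hu) (slice1 hv), iteratedDeriv_fun_add (slice2 hu) (slice2 hv)]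
  ring

theorem lap_const_mul {u : ℝ × ℝ → ℝ} {x : ℝ × ℝ} (c : ℝ) :
    lap (fun y => c * u y) x = c * lap u x := by
  simp only [lap_iter]
  rw [iteratedDeriv_const_mul_field, iteratedDeriv_const_mul_field]
  ring

theorem lap_neg {u : ℝ × ℝ → ℝ} {x : ℝ × ℝ} :
    lap (fun y => - u y) x = - lap u x := by
  simpa only [neg_mul, one_mul] using lap_const_mul (u := u) (x := x) (-1)

theorem lap_sub {u v : ℝ × ℝ → ℝ} {x : ℝ × ℝ} (hu : ContDiffAt ℝ 2 u x) (hv : ContDiffAt ℝ 2 v x) :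
    lap (fun y => u y - v y) x = lap u x - lap v x := by
  simp only [sub_eq_add_neg]
  rw [lap_add hu hv.neg, lap_neg]

theorem lap_sum {n : ℕ} {u : Fin n → ℝ × ℝ → ℝ} {x : ℝ × ℝ} (hu : ∀ i, ContDiffAt ℝ 2 (u i) x) :
    lap (fun y => ∑ i, u i y) x = ∑ i, lap (u i) x := by
  simp only [lap_iter]
  rw [iteratedDeriv_fun_sum (fun i _ => slice1 (hu i)), iteratedDeriv_fun_sum (fun i _ => slice2 (hu i)),
    Finset.sum_add_distrib]

theorem lap_refl (u : ℝ × ℝ → ℝ) (l : ℝ) (x : ℝ × ℝ) :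
    lap (fun y => u (2 * l - y.1, y.2)) x = lap u (2 * l - x.1, x.2) := by
  simp only [lap_iter]
  rw [iteratedDeriv_comp_const_sub 2 (fun s => u (s, x.2)) (2 * l)]
  simp

theorem lap_affine (c d : ℝ) (x : ℝ × ℝ) : lap (fun y => c * y.1 + d) x = 0 := by
  simp [lap]

theorem lap_sq (c : ℝ) (y x : ℝ × ℝ) :
    lap (fun z => c * ((z.1 - y.1) ^ 2 + (z.2 - y.2) ^ 2)) x = 4 * c := by
  have h : ∀ a b e : ℝ, deriv (deriv (fun s : ℝ => c * ((s - a) ^ 2 + b))) e = 2 * c := by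
    intro a b e
    have h1 : deriv (fun s : ℝ => c * ((s - a) ^ 2 + b)) = fun s => c * (2 * (s - a)) := by
      ext s
      have := ((((hasDerivAt_id s).sub_const a).pow 2).add_const b).const_mul c
      simpa using this.deriv
    rw [h1]
    have := ((((hasDerivAt_id e).sub_const a).const_mul 2)).const_mul c
    have := this.deriv
    simp only [id] at this
    rw [this]; ring
  unfold lap
  simp only
  rw [h]
  have : (fun t => c * ((x.1 - y.1) ^ 2 + (t - y.2) ^ 2)) = fun t => c * ((t - y.2) ^ 2 + (x.1 - y.1) ^ 2) := by
    ext t; ring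
  rw [this, h]; ring

theorem lap_exp_ge {u : ℝ × ℝ → ℝ} {x : ℝ × ℝ} (hu : ContDiffAt ℝ 2 u x) :
    Real.exp (u x) * lap u x ≤ lap (fun y => Real.exp (u y)) x := by
  have h : ∀ (f : ℝ → ℝ) (a : ℝ), ContDiffAt ℝ 2 f a →
      Real.exp (f a) * deriv (deriv f) a ≤ deriv (deriv (fun s => Real.exp (f s))) a := by
    intro f a hf
    have hev : ∀ᶠ s in 𝓝 a, ContDiffAt ℝ 2 f s := hf.eventually (by simp)
    have e1 : deriv (fun s => Real.exp (f s)) =ᶠ[𝓝 a] fun s => Real.exp (f s) * deriv f s := by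
      filter_upwards [hev] with s hs
      exact (hs.differentiableAt (by simp)).hasDerivAt.exp.deriv
    have h2 : HasDerivAt (deriv f) (deriv (deriv f) a) a := by
      have h3 : DifferentiableAt ℝ (fderiv ℝ f) a :=
        (hf.fderiv_right (m := 1) (by norm_num)).differentiableAt (by simp)
      have h4 : DifferentiableAt ℝ (fun s => fderiv ℝ f s 1) a :=
        h3.clm_apply (differentiableAt_const _)
      exact h4.hasDerivAt
    have h3 := ((hf.differentiableAt (by simp)).hasDerivAt.exp.mul h2).congr_of_eventuallyEq e1
    rw [h3.deriv]
    nlinarith [mul_nonneg (Real.exp_pos (f a)).le (mul_self_nonneg (deriv f a))]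
  unfold lap
  have a := h _ _ (slice1 hu)
  have b := h _ _ (slice2 hu)
  simp only [Prod.mk.eta] at a b ⊢
  rw [mul_add]
  exact add_le_add a b

theorem second_deriv_min {f : ℝ → ℝ} {a : ℝ} (hf : ContDiffAt ℝ 2 f a) (hm : IsLocalMin f a) :
    0 ≤ deriv (deriv f) a := by
  by_contra hlt
  push Not at hlt
  have hmax := isLocalMax_of_deriv_deriv_neg hlt hm.deriv_eq_zero hf.continuousAt
  have heq : f =ᶠ[𝓝 a] fun _ => f a := by
    filter_upwards [hm, hmax] with s h1 h2
    exact le_antisymm h2 h1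
  have := heq.deriv.deriv_eq
  simp at this
  linarith

theorem lap_min {u : ℝ × ℝ → ℝ} {x : ℝ × ℝ} (hu : ContDiffAt ℝ 2 u x) (hm : IsLocalMin u x) :
    0 ≤ lap u x := by
  have c1 : Filter.Tendsto (fun s : ℝ => (s, x.2)) (𝓝 x.1) (𝓝 x) :=
    Continuous.tendsto' (by fun_prop) _ _ rfl
  have c2 : Filter.Tendsto (fun s : ℝ => (x.1, s)) (𝓝 x.2) (𝓝 x) :=
    Continuous.tendsto' (by fun_prop) _ _ rfl
  exact add_nonneg (second_deriv_min (slice1 hu) (c1.eventually hm))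
    (second_deriv_min (slice2 hu) (c2.eventually hm))

open scoped Topology

theorem three_circle {H : ℝ × ℝ → ℝ} {a b : ℝ} (hab : a < b)
    (hc : ∀ q : ℝ × ℝ, a ≤ q.1 → q.1 ≤ b → ContinuousAt H q)
    (h2 : ∀ q : ℝ × ℝ, a < q.1 → q.1 < b → ContDiffAt ℝ 2 H q)
    (hl : ∀ q : ℝ × ℝ, a < q.1 → q.1 < b → lap H q < 0)
    (hp : ∀ t θ, H (t, θ + 2 * Real.pi) = H (t, θ)) (c d : ℝ)
    (ha : ∀ θ, c * a + d ≤ H (a, θ)) (hb : ∀ θ, c * b + d ≤ H (b, θ)) :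
    ∀ t θ, a ≤ t → t ≤ b → c * t + d ≤ H (t, θ) := by
  set K : ℝ × ℝ → ℝ := fun q => H q - (c * q.1 + d) with hK
  have hcomp : IsCompact (Icc a b ×ˢ Icc (0:ℝ) (2 * Real.pi)) := isCompact_Icc.prod isCompact_Icc
  have hne : (Icc a b ×ˢ Icc (0:ℝ) (2 * Real.pi)).Nonempty :=
    ⟨(a, 0), ⟨le_rfl, hab.le⟩, le_rfl, by positivity⟩
  have hcont : ContinuousOn K (Icc a b ×ˢ Icc (0:ℝ) (2 * Real.pi)) := by
    rintro q ⟨⟨q1, q2⟩, -⟩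
    refine ContinuousAt.continuousWithinAt ?_
    exact (hc q q1 q2).sub (by fun_prop)
  obtain ⟨q, hq, hmin⟩ := hcomp.exists_isMinOn hne hcont
  have hall : ∀ t θ, a ≤ t → t ≤ b → K q ≤ K (t, θ) := by
    intro t θ h1 h2
    have hper : Function.Periodic (fun θ => K (t, θ)) (2 * Real.pi) := by
      intro θ; simp only [hK, hp]
    obtain ⟨θ', hθ', he⟩ := hper.exists_mem_Ico₀ (by positivity) θ
    rw [he]
    exact hmin ⟨⟨h1, h2⟩, hθ'.1, hθ'.2.le⟩
  suffices h : 0 ≤ K q by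
    intro t θ h1 h2
    have := hall t θ h1 h2
    simp only [hK] at this h
    linarith
  by_contra hneg
  push Not at hneg
  obtain ⟨⟨q1, q2⟩, -⟩ := hq
  have q1' : a < q.1 := by
    rcases q1.lt_or_eq with h | h
    · exact h
    · have := ha q.2
      simp only [hK] at hneg
      rw [show q = (a, q.2) from by rw [h]] at hneg
      simp only at hneg
      linarith
  have q2' : q.1 < b := by
    rcases q2.lt_or_eq with h | h
    · exact h
    · have := hb q.2
      simp only [hK] at hneg
      rw [show q = (b, q.2) from by rw [← h]] at hneg
      simp only at hneg
      linarith
  have hloc : IsLocalMin K q := by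
    have o : IsOpen {p : ℝ × ℝ | a < p.1 ∧ p.1 < b} :=
      (isOpen_lt continuous_const continuous_fst).inter (isOpen_lt continuous_fst continuous_const)
    filter_upwards [o.mem_nhds ⟨q1', q2'⟩] with p hp
    exact hall p.1 p.2 hp.1.le hp.2.le
  have hCD : ContDiffAt ℝ 2 (fun y : ℝ × ℝ => c * y.1 + d) q := by fun_prop
  have := lap_min ((h2 q q1' q2').sub hCD) hloc
  rw [lap_sub (h2 q q1' q2') hCD, lap_affine] at this
  linarith [hl q q1' q2']

theorem pol_tendsto (c : ℝ × ℝ) : Filter.Tendsto (fun t : ℝ => pol c (t, 0)) Filter.atBot (𝓝 c) := by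
  have : Filter.Tendsto (fun t : ℝ => (c.1 + Real.exp t * Real.cos 0, c.2 + Real.exp t * Real.sin 0))
    Filter.atBot (𝓝 (c.1 + 0 * Real.cos 0, c.2 + 0 * Real.sin 0)) :=
    ((Real.tendsto_exp_atBot.mul_const _).const_add _).prodMk_nhds
      ((Real.tendsto_exp_atBot.mul_const _).const_add _)
  simpa [pol] using this

theorem pol_ne (c q : ℝ × ℝ) : pol c q ≠ c := by
  intro h
  have h1 := congrArg Prod.fst h
  have h2 := congrArg Prod.snd h
  simp only [pol] at h1 h2
  have e := Real.exp_pos q.1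
  have hc : Real.cos q.2 = 0 := by
    have : Real.exp q.1 * Real.cos q.2 = 0 := by linarith
    simpa [e.ne'] using this
  have hs : Real.sin q.2 = 0 := by
    have : Real.exp q.1 * Real.sin q.2 = 0 := by linarith
    simpa [e.ne'] using this
  have := Real.sin_sq_add_cos_sq q.2
  rw [hc, hs] at this
  norm_num at this

theorem removable {g : ℝ × ℝ → ℝ} {x₀ : ℝ × ℝ} {c : ℝ} (hc : 0 < c)
    (h : ∀ᶠ x in 𝓝 x₀, ContinuousAt g x ∧ 0 ≤ g x ∧ (x ≠ x₀ → ContDiffAt ℝ 2 g x ∧ lap g x < -c))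
    (h0 : g x₀ = 0) : False := by
  obtain ⟨r, hr, hball⟩ := Metric.eventually_nhds_iff.1 h
  -- log radius
  set t0 := Real.log (r / 2) with ht0
  have hin : ∀ q : ℝ × ℝ, q.1 ≤ t0 → dist (pol x₀ q) x₀ < r := by
    intro q hq
    have he : Real.exp q.1 ≤ r / 2 := by
      rw [← Real.exp_log (half_pos hr)]; exact Real.exp_le_exp.2 hq
    have e := Real.exp_pos q.1
    rw [Prod.dist_eq, Real.dist_eq, Real.dist_eq]
    simp only [pol, add_sub_cancel_left, abs_mul, Real.abs_exp]
    refine max_lt ?_ ?_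
    · nlinarith [Real.abs_cos_le_one q.2]
    · nlinarith [Real.abs_sin_le_one q.2]
  set H : ℝ × ℝ → ℝ := fun q => g (pol x₀ q) + c / 4 * Real.exp (2 * q.1) with hH
  have hHe : H = fun q => (fun y => g y + c / 4 * ((y.1 - x₀.1) ^ 2 + (y.2 - x₀.2) ^ 2)) (pol x₀ q) := by
    ext q
    simp only [hH, pol, add_sub_cancel_left]
    rw [two_mul, Real.exp_add]
    linear_combination -(c/4) * (Real.exp q.1) ^ 2 * Real.sin_sq_add_cos_sq q.2
  have hg2 : ∀ q : ℝ × ℝ, q.1 ≤ t0 → ContDiffAt ℝ 2 g (pol x₀ q) := fun q hq =>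
    ((hball (hin q hq)).2.2 (pol_ne _ _)).1
  have hsq : ∀ x, ContDiffAt ℝ 2 (fun y : ℝ × ℝ => c / 4 * ((y.1 - x₀.1) ^ 2 + (y.2 - x₀.2) ^ 2)) x := by
    intro x; fun_prop
  have hH2 : ∀ q : ℝ × ℝ, q.1 ≤ t0 → ContDiffAt ℝ 2 H q := by
    intro q hq
    rw [hHe]
    exact ContDiffAt.comp q ((hg2 q hq).add (hsq _)) (contDiff_pol x₀ (k := 2)).contDiffAt
  have hHl : ∀ q : ℝ × ℝ, q.1 ≤ t0 → lap H q < 0 := by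
    intro q hq
    rw [hHe, lap_pol ((hg2 q hq).add (hsq _)), lap_add (hg2 q hq) (hsq _), lap_sq]
    have := ((hball (hin q hq)).2.2 (pol_ne _ _)).2
    exact mul_neg_of_pos_of_neg (Real.exp_pos _) (by linarith)
  have hHp : ∀ t θ, H (t, θ + 2 * Real.pi) = H (t, θ) := by
    intro t θ; simp [hH, pol]
  have hg0 : ∀ q : ℝ × ℝ, q.1 ≤ t0 → 0 ≤ g (pol x₀ q) := fun q hq => (hball (hin q hq)).2.1
  set m := c / 4 * Real.exp (2 * t0) with hm
  have hmpos : 0 < m := by positivity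
  have hlim : Filter.Tendsto (fun t : ℝ => H (t, 0)) Filter.atBot (𝓝 0) := by
    have hcg : ContinuousAt g x₀ := (hball (by simpa using hr)).1
    have h1 := hcg.tendsto.comp (pol_tendsto x₀)
    have h2 : Filter.Tendsto (fun t : ℝ => c / 4 * Real.exp (2 * t)) Filter.atBot (𝓝 (c / 4 * 0)) :=
      (Real.tendsto_exp_atBot.comp (Filter.tendsto_id.const_mul_atBot (by norm_num : (0:ℝ) < 2))).const_mul _
    have := h1.add h2
    rw [h0] at this
    simpa using this
  obtain ⟨t1, h1, h1'⟩ := ((hlim.eventually (gt_mem_nhds (half_pos hmpos))).and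
    (Filter.eventually_lt_atBot t0)).exists
  have key := three_circle (H := H) (a := 2 * t1 - t0) (b := t0) (by linarith)
    (fun q _ hq => (hH2 q hq).continuousAt) (fun q _ hq => hH2 q hq.le) (fun q _ hq => hHl q hq.le)
    hHp (m / (2 * (t0 - t1))) (m - m / (2 * (t0 - t1)) * t0)
    (by
      intro θ
      have e : m / (2 * (t0 - t1)) * (2 * t1 - t0) + (m - m / (2 * (t0 - t1)) * t0) = 0 := by
        have : t0 - t1 ≠ 0 := by linarith
        field_simp
        ring
      rw [e]
      have := hg0 (2 * t1 - t0, θ) (by simp only; linarith)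
      simp only [hH]
      positivity)
    (by
      intro θ
      have := hg0 (t0, θ) le_rfl
      simp only [hH]
      linarith)
    t1 0 (by linarith) h1'.le
  have e : m / (2 * (t0 - t1)) * t1 + (m - m / (2 * (t0 - t1)) * t0) = m / 2 := by
    have : t0 - t1 ≠ 0 := by linarith
    field_simp
    ring
  linarith

open scoped Topology

theorem hasDerivAt_param {F F' : ℝ → ℝ → ℝ} (hF : Continuous (fun p : ℝ × ℝ => F p.1 p.2))
    (hF' : Continuous (fun p : ℝ × ℝ => F' p.1 p.2))
    (hd : ∀ r θ, HasDerivAt (fun r => F r θ) (F' r θ) r) (a b : ℝ) (r : ℝ) :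
    HasDerivAt (fun r => ∫ θ in a..b, F r θ) (∫ θ in a..b, F' r θ) r := by
  have hcomp : IsCompact (Icc (r - 1) (r + 1) ×ˢ uIcc a b) := isCompact_Icc.prod isCompact_uIcc
  obtain ⟨C, hC⟩ := hcomp.exists_bound_of_continuousOn hF'.continuousOn
  have c1 : ∀ r, Continuous (F r) := fun r => hF.comp (by fun_prop : Continuous fun θ : ℝ => (r, θ))
  have c2 : ∀ r, Continuous (F' r) := fun r => hF'.comp (by fun_prop : Continuous fun θ : ℝ => (r, θ))
  refine (intervalIntegral.hasDerivAt_integral_of_dominated_loc_of_deriv_le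
    (F := F) (F' := F') (bound := fun _ => C) (s := Icc (r - 1) (r + 1))
    (Icc_mem_nhds (by linarith) (by linarith)) (Filter.Eventually.of_forall fun r => (c1 r).aestronglyMeasurable)
    ((c1 r).intervalIntegrable _ _) (c2 r).aestronglyMeasurable ?_
    (by simp) (Filter.Eventually.of_forall fun θ _ x _ => hd x θ)).2
  refine Filter.Eventually.of_forall fun θ hθ x hx => ?_
  exact hC (x, θ) ⟨hx, uIoc_subset_uIcc hθ⟩

theorem circle_mean {g : ℝ × ℝ → ℝ} (hg : ContDiff ℝ 2 g) (y : ℝ × ℝ) {s : ℝ}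
    (hl : ∀ x : ℝ × ℝ, (x.1 - y.1) ^ 2 + (x.2 - y.2) ^ 2 ≤ s ^ 2 → 0 ≤ lap g x)
    {r : ℝ} (hr : 0 ≤ r) (hrs : r ≤ s) :
    2 * Real.pi * g y ≤ ∫ θ in (-Real.pi)..Real.pi,
      g (y.1 + r * Real.cos θ, y.2 + r * Real.sin θ) := by
  set e : ℝ → ℝ × ℝ := fun θ => (Real.cos θ, Real.sin θ) with he
  set je : ℝ → ℝ × ℝ := fun θ => (-Real.sin θ, Real.cos θ) with hje
  have ce : Continuous e := by fun_prop
  have cje : Continuous je := by fun_prop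
  have hde : ∀ θ, HasDerivAt e (je θ) θ := fun θ => (Real.hasDerivAt_cos θ).prodMk (Real.hasDerivAt_sin θ)
  have hdje : ∀ θ, HasDerivAt je (-e θ) θ := fun θ =>
    ((Real.hasDerivAt_sin θ).neg).prodMk (Real.hasDerivAt_cos θ)
  set Γ : ℝ → ℝ → ℝ × ℝ := fun r θ => y + r • e θ with hΓ
  have cΓ : Continuous (fun p : ℝ × ℝ => Γ p.1 p.2) := by fun_prop
  have hΓr : ∀ r θ, HasDerivAt (fun r => Γ r θ) (e θ) r := by
    intro r θ
    have := ((hasDerivAt_id r).smul_const (e θ)).const_add y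
    rw [one_smul] at this
    exact this
  have hΓθ : ∀ r θ, HasDerivAt (fun θ => Γ r θ) (r • je θ) θ := by
    intro r θ
    exact ((hde θ).const_smul r).const_add y
  have hg1 : ∀ x, HasFDerivAt g (fderiv ℝ g x) x := fun x => (hg.differentiable (by simp) x).hasFDerivAt
  have hD : ContDiff ℝ 1 (fderiv ℝ g) := hg.fderiv_right (by norm_num)
  have hg2 : ∀ x, HasFDerivAt (fderiv ℝ g) (fderiv ℝ (fderiv ℝ g) x) x := fun x =>
    (hD.differentiable (by simp) x).hasFDerivAt
  have cD : Continuous (fderiv ℝ g) := hD.continuous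
  have cDD : Continuous (fderiv ℝ (fderiv ℝ g)) := hD.continuous_fderiv (by simp)
  have cg := hg.continuous
  -- A and its derivative
  set A : ℝ → ℝ := fun r => ∫ θ in (-Real.pi)..Real.pi, g (Γ r θ) with hA
  set A1 : ℝ → ℝ := fun r => ∫ θ in (-Real.pi)..Real.pi, fderiv ℝ g (Γ r θ) (e θ) with hA1
  have dA : ∀ r, HasDerivAt A (A1 r) r := fun r =>
    hasDerivAt_param (F := fun r θ => g (Γ r θ)) (F' := fun r θ => fderiv ℝ g (Γ r θ) (e θ))
      (by fun_prop) (by fun_prop)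
      (fun r θ => (hg1 _).comp_hasDerivAt r (hΓr r θ)) _ _ r
  have dA1 : ∀ r, HasDerivAt A1 (∫ θ in (-Real.pi)..Real.pi,
      fderiv ℝ (fderiv ℝ g) (Γ r θ) (e θ) (e θ)) r := fun r =>
    hasDerivAt_param (F := fun r θ => fderiv ℝ g (Γ r θ) (e θ))
      (F' := fun r θ => fderiv ℝ (fderiv ℝ g) (Γ r θ) (e θ) (e θ))
      (by fun_prop) (by fun_prop)
      (fun r θ => by
        have := ((hg2 _).comp_hasDerivAt r (hΓr r θ)).clm_apply (hasDerivAt_const r (e θ))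
        simpa using this) _ _ r
  have dB : ∀ r, HasDerivAt (fun r => r * A1 r) (r * ∫ θ in (-Real.pi)..Real.pi, lap g (Γ r θ)) r := by
    intro r
    have h1 := (hasDerivAt_id r).mul (dA1 r)
    refine h1.congr_deriv ?_
    -- theta derivative integrates to zero
    have hz : ∫ θ in (-Real.pi)..Real.pi, (r * fderiv ℝ (fderiv ℝ g) (Γ r θ) (je θ) (je θ)
        - fderiv ℝ g (Γ r θ) (e θ)) = 0 := by
      have hFT := intervalIntegral.integral_eq_sub_of_hasDerivAt (a := -Real.pi) (b := Real.pi)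
        (f := fun θ => fderiv ℝ g (Γ r θ) (je θ))
        (f' := fun θ => r * fderiv ℝ (fderiv ℝ g) (Γ r θ) (je θ) (je θ) - fderiv ℝ g (Γ r θ) (e θ))
        (fun θ _ => by
          have := ((hg2 _).comp_hasDerivAt θ (hΓθ r θ)).clm_apply (hdje θ)
          simpa [sub_eq_add_neg] using this)
        (Continuous.intervalIntegrable (by fun_prop) _ _)
      rw [hFT]
      simp [hΓ, he, hje]
    have hIntg : ∀ θ, lap g (Γ r θ) = fderiv ℝ (fderiv ℝ g) (Γ r θ) (e θ) (e θ) +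
        fderiv ℝ (fderiv ℝ g) (Γ r θ) (je θ) (je θ) := by
      intro θ
      rw [lap_eq hg.contDiffAt]
      have := bil_rot (fderiv ℝ (fderiv ℝ g) (Γ r θ)) (Real.cos θ) (Real.sin θ)
      rw [Real.cos_sq_add_sin_sq, one_mul] at this
      exact this.symm
    simp only [hIntg]
    rw [intervalIntegral.integral_sub (Continuous.intervalIntegrable (by fun_prop) _ _)
      (Continuous.intervalIntegrable (by fun_prop) _ _), intervalIntegral.integral_const_mul] at hz
    rw [intervalIntegral.integral_add (Continuous.intervalIntegrable (by fun_prop) _ _)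
      (Continuous.intervalIntegrable (by fun_prop) _ _)]
    simp only [id, one_mul, hA1]
    linarith
  have hΓin : ∀ r, 0 ≤ r → r ≤ s → ∀ θ, 0 ≤ lap g (Γ r θ) := by
    intro r h0 h1 θ
    apply hl
    simp only [hΓ, he, Prod.fst_add, Prod.snd_add, Prod.smul_fst, Prod.smul_snd, smul_eq_mul,
      add_sub_cancel_left]
    have : (r * Real.cos θ) ^ 2 + (r * Real.sin θ) ^ 2 = r ^ 2 := by
      linear_combination r ^ 2 * Real.sin_sq_add_cos_sq θ
    rw [this]
    exact pow_le_pow_left₀ h0 h1 2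
  have hmono : ∀ r, 0 ≤ r → r ≤ s → 0 ≤ r * A1 r := by
    intro r h0 h1
    have : MonotoneOn (fun r => r * A1 r) (Icc 0 s) := by
      refine monotoneOn_of_deriv_nonneg (convex_Icc 0 s)
        (fun x _ => (dB x).continuousAt.continuousWithinAt)
        (fun x _ => (dB x).differentiableAt.differentiableWithinAt) ?_
      intro x hx
      rw [interior_Icc] at hx
      rw [(dB x).deriv]
      refine mul_nonneg hx.1.le (intervalIntegral.integral_nonneg (by linarith [Real.pi_pos]) ?_)
      intro θ _
      exact hΓin x hx.1.le hx.2.le θ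
    simpa using this ⟨le_rfl, h0.trans h1⟩ ⟨h0, h1⟩ h0
  have hAm : MonotoneOn A (Icc 0 s) := by
    refine monotoneOn_of_deriv_nonneg (convex_Icc 0 s)
      (fun x _ => (dA x).continuousAt.continuousWithinAt)
      (fun x _ => (dA x).differentiableAt.differentiableWithinAt) ?_
    intro x hx
    rw [interior_Icc] at hx
    rw [(dA x).deriv]
    exact nonneg_of_mul_nonneg_right (hmono x hx.1.le hx.2.le) hx.1
  have h := hAm ⟨le_rfl, hr.trans hrs⟩ ⟨hr, hrs⟩ hr
  have h0 : A 0 = 2 * Real.pi * g y := by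
    simp only [hA, hΓ, zero_smul, add_zero, intervalIntegral.integral_const, smul_eq_mul]
    ring
  rw [h0] at h
  exact h

def dsk (y : ℝ × ℝ) (s : ℝ) : Set (ℝ × ℝ) := {x | (x.1 - y.1) ^ 2 + (x.2 - y.2) ^ 2 < s ^ 2}

theorem dsk_open (y : ℝ × ℝ) (s : ℝ) : IsOpen (dsk y s) :=
  isOpen_lt (by fun_prop) (by fun_prop)

theorem dsk_subset (y : ℝ × ℝ) {s : ℝ} (hs : 0 ≤ s) :
    dsk y s ⊆ Icc (y.1 - s) (y.1 + s) ×ˢ Icc (y.2 - s) (y.2 + s) := by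
  intro x hx
  simp only [dsk, mem_ofPred_eq] at hx
  have h1 := abs_le_of_sq_le_sq' (by nlinarith [sq_nonneg (x.2 - y.2)] : (x.1 - y.1) ^ 2 ≤ s ^ 2) hs
  have h2 := abs_le_of_sq_le_sq' (by nlinarith [sq_nonneg (x.1 - y.1)] : (x.2 - y.2) ^ 2 ≤ s ^ 2) hs
  refine ⟨⟨?_, ?_⟩, ?_, ?_⟩ <;> linarith [h1.1, h1.2, h2.1, h2.2]

theorem dsk_integrable {g : ℝ × ℝ → ℝ} (hg : Continuous g) (y : ℝ × ℝ) {s : ℝ} (hs : 0 ≤ s) :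
    IntegrableOn g (dsk y s) :=
  (hg.continuousOn.integrableOn_compact (isCompact_Icc.prod isCompact_Icc)).mono_set (dsk_subset y hs)

theorem dsk_polar {g : ℝ × ℝ → ℝ} (hg : Continuous g) (y : ℝ × ℝ) {s : ℝ} (hs : 0 ≤ s) :
    ∫ x in dsk y s, g x = ∫ r in (0:ℝ)..s, r * ∫ θ in (-Real.pi)..Real.pi,
      g (y.1 + r * Real.cos θ, y.2 + r * Real.sin θ) := by
  rw [← integral_indicator (dsk_open y s).measurableSet,
    ← integral_add_left_eq_self _ y, ← integral_comp_polarCoord_symm]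
  have hset : (Ioo 0 s) ×ˢ Ioo (-Real.pi) Real.pi ⊆ polarCoord.target := by
    intro p hp
    exact ⟨hp.1.1, hp.2⟩
  have h1 : ∀ p ∈ polarCoord.target, p.1 • (dsk y s).indicator g (y + polarCoord.symm p) =
      ((Ioo 0 s) ×ˢ Ioo (-Real.pi) Real.pi).indicator
        (fun p => p.1 * g (y.1 + p.1 * Real.cos p.2, y.2 + p.1 * Real.sin p.2)) p := by
    rintro p ⟨hp1, hp2⟩
    have hp1' : 0 < p.1 := hp1
    have hiff : y + polarCoord.symm p ∈ dsk y s ↔ p ∈ (Ioo 0 s) ×ˢ Ioo (-Real.pi) Real.pi := by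
      have : (p.1 * Real.cos p.2) ^ 2 + (p.1 * Real.sin p.2) ^ 2 = p.1 ^ 2 := by
        linear_combination p.1 ^ 2 * Real.sin_sq_add_cos_sq p.2
      simp only [dsk, mem_ofPred_eq, polarCoord_symm_apply, Prod.fst_add, Prod.snd_add,
        add_sub_cancel_left, this]
      rw [pow_lt_pow_iff_left₀ hp1'.le hs (by norm_num)]
      constructor
      · intro h; exact ⟨⟨hp1', h⟩, hp2⟩
      · intro h; exact h.1.2
    by_cases h : p ∈ (Ioo 0 s) ×ˢ Ioo (-Real.pi) Real.pi
    · rw [indicator_of_mem h, indicator_of_mem (hiff.2 h)]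
      simp [polarCoord_symm_apply]
      left; rfl
    · rw [indicator_of_notMem h, indicator_of_notMem (fun h' => h (hiff.1 h'))]
      simp
  rw [setIntegral_congr_fun polarCoord.open_target.measurableSet h1,
    setIntegral_indicator (measurableSet_Ioo.prod measurableSet_Ioo),
    inter_eq_self_of_subset_right hset]
  rw [Measure.volume_eq_prod, setIntegral_prod, intervalIntegral.integral_of_le hs,
    integral_Ioc_eq_integral_Ioo]
  · refine setIntegral_congr_fun measurableSet_Ioo fun r _ => ?_
    simp only
    rw [intervalIntegral.integral_of_le (by linarith [Real.pi_pos]), integral_Ioc_eq_integral_Ioo,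
      integral_const_mul]
  · have : Continuous (fun p : ℝ × ℝ => p.1 * g (y.1 + p.1 * Real.cos p.2, y.2 + p.1 * Real.sin p.2)) := by
      fun_prop
    exact (this.continuousOn.integrableOn_compact
      (isCompact_Icc.prod isCompact_Icc (s := Icc 0 s) (t := Icc (-Real.pi) Real.pi))).mono_set
      (prod_mono Ioo_subset_Icc_self Ioo_subset_Icc_self)

theorem mean_value {g : ℝ × ℝ → ℝ} (hg : ContDiff ℝ 2 g) (y : ℝ × ℝ) {s K : ℝ} (hs : 0 ≤ s)
    (hl : ∀ x : ℝ × ℝ, (x.1 - y.1) ^ 2 + (x.2 - y.2) ^ 2 ≤ s ^ 2 → -K ≤ lap g x) :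
    Real.pi * s ^ 2 * g y ≤ (∫ x in dsk y s, g x) + Real.pi * K * s ^ 4 / 8 := by
  have hsq : ∀ x, ContDiffAt ℝ 2 (fun x : ℝ × ℝ => K / 4 * ((x.1 - y.1) ^ 2 + (x.2 - y.2) ^ 2)) x := by
    intro x; fun_prop
  have hG : ContDiff ℝ 2 (fun x => g x + K / 4 * ((x.1 - y.1) ^ 2 + (x.2 - y.2) ^ 2)) := by
    fun_prop
  have cg := hg.continuous
  have key : ∀ r, 0 ≤ r → r ≤ s → 2 * Real.pi * g y - 2 * Real.pi * (K / 4 * r ^ 2) ≤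
      ∫ θ in (-Real.pi)..Real.pi, g (y.1 + r * Real.cos θ, y.2 + r * Real.sin θ) := by
    intro r h0 h1
    have := circle_mean hG y (s := s) (fun x hx => by
      rw [lap_add hg.contDiffAt (hsq x), lap_sq]
      linarith [hl x hx]) h0 h1
    have e : ∀ θ : ℝ, (r * Real.cos θ) ^ 2 + (r * Real.sin θ) ^ 2 = r ^ 2 := fun θ => by
      linear_combination r ^ 2 * Real.sin_sq_add_cos_sq θ
    simp only [add_sub_cancel_left, e, sub_self] at this
    rw [intervalIntegral.integral_add (Continuous.intervalIntegrable (by fun_prop) _ _)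
      (Continuous.intervalIntegrable (by fun_prop) _ _)] at this
    simp only [intervalIntegral.integral_const, smul_eq_mul] at this
    nlinarith
  rw [dsk_polar cg y hs]
  have hcont : Continuous fun r : ℝ => ∫ θ in (-Real.pi)..Real.pi,
      g (y.1 + r * Real.cos θ, y.2 + r * Real.sin θ) := by
    apply intervalIntegral.continuous_parametric_intervalIntegral_of_continuous'
    simp only [Function.uncurry_def]
    fun_prop
  have hmono := intervalIntegral.integral_mono_on (μ := volume) (a := 0) (b := s) hs
    (f := fun r => r * (2 * Real.pi * g y - 2 * Real.pi * (K / 4 * r ^ 2)))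
    (g := fun r => r * ∫ θ in (-Real.pi)..Real.pi, g (y.1 + r * Real.cos θ, y.2 + r * Real.sin θ))
    (Continuous.intervalIntegrable (by fun_prop) _ _)
    (Continuous.intervalIntegrable (by fun_prop) _ _)
    (fun r hr => mul_le_mul_of_nonneg_left (key r hr.1 hr.2) hr.1)
  have hval : ∫ r in (0:ℝ)..s, r * (2 * Real.pi * g y - 2 * Real.pi * (K / 4 * r ^ 2)) =
      Real.pi * s ^ 2 * g y - Real.pi * K * s ^ 4 / 8 := by
    have : ∀ r : ℝ, r * (2 * Real.pi * g y - 2 * Real.pi * (K / 4 * r ^ 2)) =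
      (2 * Real.pi * g y) * r - (Real.pi * K / 2) * r ^ 3 := fun r => by ring
    simp only [this]
    rw [intervalIntegral.integral_sub (Continuous.intervalIntegrable (by fun_prop) _ _)
      (Continuous.intervalIntegrable (by fun_prop) _ _), intervalIntegral.integral_const_mul,
      intervalIntegral.integral_const_mul, integral_id, integral_pow]
    push_cast
    ring
  rw [hval] at hmono
  linarith

open scoped Topology

theorem nrm_eq (x : ℝ × ℝ) : nrm x = ‖(⟨x.1, x.2⟩ : ℂ)‖ := by
  rw [Complex.norm_def, Complex.normSq_mk, nrm]
  congr 1; ring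

theorem nrm_tri (a b : ℝ × ℝ) : nrm (a + b) ≤ nrm a + nrm b := by
  simp only [nrm_eq]
  exact norm_add_le (⟨a.1, a.2⟩ : ℂ) ⟨b.1, b.2⟩

theorem nrm_sub_comm (a b : ℝ × ℝ) : nrm (a - b) = nrm (b - a) := by
  unfold nrm
  congr 1
  simp only [Prod.fst_sub, Prod.snd_sub]
  ring

theorem nrm_nonneg (a : ℝ × ℝ) : 0 ≤ nrm a := Real.sqrt_nonneg _

theorem nrm_sq (a : ℝ × ℝ) : nrm a ^ 2 = a.1 ^ 2 + a.2 ^ 2 := Real.sq_sqrt (by positivity)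

theorem nrm_cont : Continuous nrm := by unfold nrm; fun_prop

theorem mem_dsk_iff {x y : ℝ × ℝ} {s : ℝ} (hs : 0 ≤ s) : x ∈ dsk y s ↔ nrm (x - y) < s := by
  rw [← pow_lt_pow_iff_left₀ (nrm_nonneg _) hs (two_ne_zero), nrm_sq]
  rfl

theorem cdsk_iff {x y : ℝ × ℝ} {s : ℝ} (hs : 0 ≤ s) :
    (x.1 - y.1) ^ 2 + (x.2 - y.2) ^ 2 ≤ s ^ 2 ↔ nrm (x - y) ≤ s := by
  rw [← pow_le_pow_iff_left₀ (nrm_nonneg _) hs (two_ne_zero), nrm_sq]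
  rfl

theorem heinz {ρ : ℝ × ℝ → ℝ} (h2 : ContDiff ℝ 2 ρ) (hpos : ∀ x, 0 < ρ x) {C ε : ℝ} (hC : 0 < C)
    (hl : ∀ x, -(C * ρ x ^ 2) ≤ lap ρ x) (y : ℝ × ℝ) (hIntg : ∫ x in dsk y 1, ρ x ≤ ε)
    (hε : ε < Real.pi / (8 * C)) : ρ y ≤ 8 * ε / Real.pi := by
  have hpi := Real.pi_pos
  have cρ := h2.continuous
  have cn := nrm_cont
  have hcl : IsClosed {x | nrm (x - y) ≤ 1} := isClosed_le (by fun_prop) (by fun_prop)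
  have hcomp : IsCompact {x | nrm (x - y) ≤ 1} := by
    refine (isCompact_Icc.prod isCompact_Icc (s := Icc (y.1 - 2) (y.1 + 2))
      (t := Icc (y.2 - 2) (y.2 + 2))).of_isClosed_subset hcl ?_
    intro x hx
    refine dsk_subset y (s := 2) (by norm_num) ?_
    rw [mem_dsk_iff (by norm_num)]
    exact lt_of_le_of_lt hx (by norm_num)
  have hyy : nrm (y - y) = 0 := by simp [nrm]
  obtain ⟨y0, hy0, hmax⟩ := hcomp.exists_isMaxOn (f := fun x => (1 - nrm (x - y)) ^ 2 * ρ x)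
    ⟨y, by rw [mem_ofPred_eq, hyy]; norm_num⟩ (by fun_prop)
  have hmax' : ∀ x, nrm (x - y) ≤ 1 → (1 - nrm (x - y)) ^ 2 * ρ x ≤ (1 - nrm (y0 - y)) ^ 2 * ρ y0 :=
    fun x hx => hmax hx
  set s := (1 - nrm (y0 - y)) / 2 with hs
  set e := ρ y0 with he
  have hepos : 0 < e := hpos y0
  have hd : 1 - nrm (y0 - y) = 2 * s := by rw [hs]; ring
  rw [hd] at hmax'
  have hs0 : 0 ≤ s := by
    have : nrm (y0 - y) ≤ 1 := hy0
    linarith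
  have hy := hmax' y (by rw [hyy]; norm_num)
  rw [hyy] at hy
  have hspos : 0 < s := by
    rcases hs0.lt_or_eq with h | h
    · exact h
    · rw [← h] at hy
      have := hpos y
      norm_num at hy
      linarith
  have htri : ∀ x, nrm (x - y0) ≤ s → nrm (x - y) ≤ 1 - s := by
    intro x hx
    have := nrm_tri (x - y0) (y0 - y)
    rw [sub_add_sub_cancel] at this
    linarith
  have hle : ∀ x, nrm (x - y0) ≤ s → ρ x ≤ 4 * e := by
    intro x hx
    have h1 := htri x hx
    have h3 := hmax' x (by linarith)
    have h4 : s ^ 2 ≤ (1 - nrm (x - y)) ^ 2 := pow_le_pow_left₀ hs0 (by linarith) 2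
    have h5 : s ^ 2 * ρ x ≤ s ^ 2 * (4 * e) := by
      have := mul_le_mul_of_nonneg_right h4 (hpos x).le
      nlinarith
    exact le_of_mul_le_mul_left h5 (by positivity)
  have hmv : ∀ t, 0 ≤ t → t ≤ s → Real.pi * t ^ 2 * e ≤ ε + 2 * Real.pi * C * e ^ 2 * t ^ 4 := by
    intro t h0 h1
    have h := mean_value h2 y0 (s := t) (K := 16 * C * e ^ 2) h0 (fun x hx => by
      rw [cdsk_iff h0] at hx
      have h3 := hle x (hx.trans h1)
      have h4 : ρ x ^ 2 ≤ (4 * e) ^ 2 := pow_le_pow_left₀ (hpos x).le h3 2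
      have := hl x
      nlinarith)
    have hsub : dsk y0 t ⊆ dsk y 1 := by
      intro x hx
      rw [mem_dsk_iff h0] at hx
      rw [mem_dsk_iff (by norm_num)]
      have := htri x (by linarith)
      linarith
    have h5 : ∫ x in dsk y0 t, ρ x ≤ ∫ x in dsk y 1, ρ x :=
      setIntegral_mono_set (dsk_integrable cρ y (by norm_num))
        (Filter.Eventually.of_forall fun x => (hpos x).le) (Filter.Eventually.of_forall hsub)
    have h6 : Real.pi * (16 * C * e ^ 2) * t ^ 4 / 8 = 2 * Real.pi * C * e ^ 2 * t ^ 4 := by ring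
    rw [h6] at h
    linarith
  have hsmall : 4 * C * e * s ^ 2 < 1 := by
    by_contra hcon
    push Not at hcon
    have hq : 0 < 1 / (4 * C * e) := by positivity
    have hts : √(1 / (4 * C * e)) ≤ s := by
      rw [Real.sqrt_le_left hs0, div_le_iff₀ (by positivity)]
      linarith
    have h := hmv _ (Real.sqrt_nonneg _) hts
    rw [show √(1 / (4 * C * e)) ^ 4 = (√(1 / (4 * C * e)) ^ 2) ^ 2 by ring, Real.sq_sqrt hq.le] at h
    have e1 : Real.pi * (1 / (4 * C * e)) * e = 2 * (Real.pi / (8 * C)) := by field_simp; norm_num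
    have e2 : 2 * Real.pi * C * e ^ 2 * (1 / (4 * C * e)) ^ 2 = Real.pi / (8 * C) := by
      field_simp; norm_num
    rw [e1, e2] at h
    linarith
  have h := hmv s hs0 le_rfl
  have h7 : 2 * Real.pi * C * e ^ 2 * s ^ 4 ≤ Real.pi * s ^ 2 * e / 2 := by
    have : 2 * Real.pi * C * e ^ 2 * s ^ 4 = (Real.pi * s ^ 2 * e / 2) * (4 * C * e * s ^ 2) := by ring
    rw [this]
    exact mul_le_of_le_one_right (by positivity) hsmall.le
  rw [le_div_iff₀ hpi]
  nlinarith

theorem harnack {p : ℝ × ℝ → ℝ} (h2 : ContDiff ℝ 2 p) {y y' : ℝ × ℝ} {C : ℝ}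
    (hp : ∀ x, nrm (x - y) ≤ 8 → 0 ≤ p x ∧ 0 ≤ lap p x ∧ lap p x ≤ C)
    (hyy : nrm (y' - y) ≤ 4) : p y' / 4 ≤ p y + 8 * C := by
  have hpi := Real.pi_pos
  have hin : ∀ x, nrm (x - y') ≤ 4 → nrm (x - y) ≤ 8 := by
    intro x hx
    have := nrm_tri (x - y') (y' - y)
    rw [sub_add_sub_cancel] at this
    linarith
  have h1 := mean_value h2 y' (s := 4) (K := 0) (by norm_num) (fun x hx => by
    rw [cdsk_iff (by norm_num)] at hx
    simpa using (hp x (hin x hx)).2.1)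
  have h3 := mean_value h2.neg y (s := 8) (K := C) (by norm_num) (fun x hx => by
    rw [cdsk_iff (by norm_num)] at hx
    rw [lap_neg]
    linarith [(hp x hx).2.2])
  rw [integral_neg] at h3
  have h4 : ∫ x in dsk y' 4, p x ≤ ∫ x in dsk y 8, p x := by
    refine setIntegral_mono_set (dsk_integrable h2.continuous y (by norm_num)) ?_ ?_
    · refine (ae_restrict_iff' (dsk_open y 8).measurableSet).2 (Filter.Eventually.of_forall fun x hx => ?_)
      rw [mem_dsk_iff (by norm_num)] at hx
      exact (hp x hx.le).1
    · refine Filter.Eventually.of_forall fun x hx => ?_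
      have hx' : x ∈ dsk y' 4 := hx
      rw [mem_dsk_iff (by norm_num)] at hx'
      change x ∈ dsk y 8
      rw [mem_dsk_iff (by norm_num)]
      have := nrm_tri (x - y') (y' - y)
      rw [sub_add_sub_cancel] at this
      linarith
  have h5 : Real.pi * (16 * p y') ≤ Real.pi * (64 * p y + 512 * C) := by
    nlinarith
  have := le_of_mul_le_mul_left h5 hpi
  linarith

theorem decay {n : ℕ} (A : Matrix (Fin n) (Fin n) ℝ) (hA0 : ∀ i j, 0 ≤ A i j)
    (hrow : ∀ i, ∃ j, A i j ≠ 0) (ψ : Fin n → ℝ × ℝ → ℝ) (h2 : ∀ i, ContDiff ℝ 2 (ψ i))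
    (hper : ∀ i t θ, ψ i (t, θ + 2 * Real.pi) = ψ i (t, θ))
    (hlap : ∀ i q, lap (ψ i) q = -∑ j, A i j * Real.exp (ψ j q))
    (hE : ∀ ε > 0, ∃ T, ∀ y : ℝ × ℝ, T ≤ y.1 → ∀ j, ∫ x in dsk y 1, Real.exp (ψ j x) ≤ ε) :
    ∀ i, ∃ C δ T : ℝ, 0 < δ ∧ ∀ q : ℝ × ℝ, T ≤ q.1 → ψ i q ≤ C - δ * q.1 := by
  intro i0
  have hpi := Real.pi_pos
  set S : ℝ := ∑ i, ∑ j, A i j + 1 with hS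
  have hSA : ∀ i, ∑ j, A i j ≤ S := by
    intro i
    have : ∑ j, A i j ≤ ∑ i, ∑ j, A i j := Finset.single_le_sum (f := fun i => ∑ j, A i j)
      (fun i _ => Finset.sum_nonneg fun j _ => hA0 i j) (Finset.mem_univ i)
    linarith
  have hSpos : 0 < S := by
    have : 0 ≤ ∑ i, ∑ j, A i j := Finset.sum_nonneg fun i _ => Finset.sum_nonneg fun j _ => hA0 i j
    linarith
  have hAS : ∀ i j, A i j ≤ S := fun i j =>
    (Finset.single_le_sum (f := fun j => A i j) (fun j _ => hA0 i j) (Finset.mem_univ j)).trans (hSA i)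
  set ρ : ℝ × ℝ → ℝ := fun q => ∑ j, Real.exp (ψ j q) with hρ
  have hρ2 : ContDiff ℝ 2 ρ := by
    rw [hρ]
    exact ContDiff.sum fun j _ => (h2 j).exp
  have hle : ∀ j q, Real.exp (ψ j q) ≤ ρ q := fun j q =>
    Finset.single_le_sum (f := fun j => Real.exp (ψ j q)) (fun j _ => (Real.exp_pos _).le) (Finset.mem_univ j)
  have hρpos : ∀ q, 0 < ρ q := fun q => (Real.exp_pos _).trans_le (hle i0 q)
  have hsumle : ∀ i q, ∑ j, A i j * Real.exp (ψ j q) ≤ S * ρ q := by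
    intro i q
    rw [hρ, Finset.mul_sum]
    exact Finset.sum_le_sum fun j _ => mul_le_mul_of_nonneg_right (hAS i j) (Real.exp_pos _).le
  have hρl : ∀ q, -(S * ρ q ^ 2) ≤ lap ρ q := by
    intro q
    rw [show lap ρ q = ∑ j, lap (fun q => Real.exp (ψ j q)) q from
      lap_sum fun j => (h2 j).exp.contDiffAt]
    have h1 : ∑ j, Real.exp (ψ j q) * (-(S * ρ q)) ≤ ∑ j, lap (fun q => Real.exp (ψ j q)) q := by
      refine Finset.sum_le_sum fun j _ => ?_
      refine le_trans ?_ (lap_exp_ge (h2 j).contDiffAt)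
      refine mul_le_mul_of_nonneg_left ?_ (Real.exp_pos _).le
      rw [hlap]
      linarith [hsumle j q]
    rw [← Finset.sum_mul] at h1
    change ρ q * _ ≤ _ at h1
    linarith [h1]
  -- smallness at infinity
  have hsmall : ∀ η > 0, ∃ T, ∀ q : ℝ × ℝ, T ≤ q.1 → ρ q ≤ η := by
    intro η hη
    have hn : 0 < (n : ℝ) := by
      have : 0 < n := lt_of_le_of_lt (Nat.zero_le _) i0.2
      exact_mod_cast this
    set ε := min (η * Real.pi / 8) (Real.pi / (16 * S)) with hε
    have hεpos : 0 < ε := by positivity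
    obtain ⟨T, hT⟩ := hE (ε / n) (by positivity)
    refine ⟨T, fun q hq => ?_⟩
    have hIntg : ∫ x in dsk q 1, ρ x ≤ ε := by
      rw [hρ, integral_finsetSum _ fun j _ => dsk_integrable (h2 j).exp.continuous q (by norm_num)]
      calc _ ≤ ∑ j : Fin n, ε / n := Finset.sum_le_sum fun j _ => hT q hq j
        _ = ε := by
          simp
          field_simp
    have h1 : ε < Real.pi / (8 * S) := by
      refine (min_le_right _ _).trans_lt ?_
      apply div_lt_div_of_pos_left hpi (by positivity)
      linarith
    have h3 := heinz hρ2 hρpos hSpos hρl q hIntg h1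
    refine h3.trans ?_
    have : ε ≤ η * Real.pi / 8 := min_le_left _ _
    rw [div_le_iff₀ hpi]
    linarith
  obtain ⟨T0, hT0⟩ := hsmall 1 one_pos
  have hψ0 : ∀ j (q : ℝ × ℝ), T0 ≤ q.1 → ψ j q ≤ 0 := by
    intro j q hq
    have := (hle j q).trans (hT0 q hq)
    rwa [Real.exp_le_one_iff] at this
  have hneg : ∀ i q, lap (ψ i) q < 0 := by
    intro i q
    rw [hlap, neg_lt_zero]
    obtain ⟨j, hj⟩ := hrow i
    refine Finset.sum_pos' (fun j _ => mul_nonneg (hA0 i j) (Real.exp_pos _).le) ⟨j, Finset.mem_univ j, ?_⟩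
    exact mul_pos (lt_of_le_of_ne (hA0 i j) hj.symm) (Real.exp_pos _)
  have perf : ∀ t, Function.Periodic (fun θ => ψ i0 (t, θ)) (2 * Real.pi) := fun t θ => hper i0 t θ
  -- lower bound on the first circle
  obtain ⟨m0, hm0⟩ : ∃ m0, ∀ θ, m0 ≤ ψ i0 (T0, θ) := by
    have hc : Continuous fun θ => ψ i0 (T0, θ) := (h2 i0).continuous.comp (by fun_prop)
    obtain ⟨m0, hm0⟩ := (isCompact_Icc (a := (0:ℝ)) (b := 2 * Real.pi)).bddBelow_image hc.continuousOn
    refine ⟨m0, fun θ => ?_⟩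
    obtain ⟨θ', hθ', he⟩ := (perf T0).exists_mem_Ico₀ (by positivity) θ
    rw [he]
    exact hm0 ⟨θ', ⟨hθ'.1, hθ'.2.le⟩, rfl⟩
  obtain ⟨T1, hT1⟩ := hsmall (Real.exp (m0 - 2)) (Real.exp_pos _)
  set t1 := max T1 (T0 + 1) with ht1
  have ht1ψ : ψ i0 (t1, 0) ≤ m0 - 2 := by
    have := (hle i0 (t1, 0)).trans (hT1 (t1, 0) (le_max_left _ _))
    exact Real.exp_le_exp.1 this
  have ht10 : T0 + 1 ≤ t1 := le_max_right _ _
  set k := 1 / (t1 - T0) with hk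
  have hkpos : 0 < k := one_div_pos.2 (by linarith)
  have hk1 : k * (t1 - T0) = 1 := by
    rw [hk]; field_simp
    exact div_self (by linarith)
  refine ⟨(m0 + k * T0) / 4 + 8 * S, k / 4, max (t1 + 1) (T0 + 8), by positivity, ?_⟩
  rintro ⟨t, θ⟩ hq
  have hq1 : t1 + 1 ≤ t := (le_max_left _ _).trans hq
  have hq2 : T0 + 8 ≤ t := (le_max_right _ _).trans hq
  obtain ⟨θ1, hθ1⟩ : ∃ θ1, ψ i0 (t, θ1) < (-k) * t + (m0 + k * T0) := by
    by_contra hcon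
    push Not at hcon
    have := three_circle (H := ψ i0) (a := T0) (b := t) (by linarith)
      (fun q _ _ => (h2 i0).continuous.continuousAt) (fun q _ _ => (h2 i0).contDiffAt)
      (fun q _ _ => hneg i0 q) (hper i0) (-k) (m0 + k * T0)
      (fun θ => by linarith [hm0 θ]) hcon t1 0 (by linarith) (by linarith)
    nlinarith
  obtain ⟨θ2, hθ2, he⟩ := (perf t).exists_mem_Ico (by positivity) θ1 (θ - Real.pi)
  rw [he] at hθ1
  have hH := harnack (p := fun q => -ψ i0 q) (h2 i0).neg (y := (t, θ)) (y' := (t, θ2)) (C := S)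
    (fun x hx => by
      have hx1 : T0 ≤ x.1 := by
        have h3 : (x.1 - t) ^ 2 ≤ 8 ^ 2 := by
          have := (cdsk_iff (x := x) (y := (t, θ)) (s := 8) (by norm_num)).2 hx
          simp only at this
          nlinarith [sq_nonneg (x.2 - θ)]
        have := abs_le_of_sq_le_sq' h3 (by norm_num)
        linarith [this.1]
      refine ⟨by linarith [hψ0 i0 x hx1], ?_, ?_⟩
      · rw [lap_neg]; linarith [hneg i0 x]
      · rw [lap_neg, hlap, neg_neg]
        refine (hsumle i0 x).trans ?_
        nlinarith [hT0 x hx1])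
    (by
      rw [← cdsk_iff (by norm_num)]
      simp only [sub_self]
      have h3 := hθ2.1
      have h4 := hθ2.2
      have := Real.pi_lt_four
      nlinarith)
  simp only at hH ⊢
  linarith

open scoped Topology

theorem nrm_pol (q : ℝ × ℝ) : nrm (pol 0 q) = Real.exp q.1 := by
  unfold nrm pol
  rw [show ((0:ℝ × ℝ).1 + Real.exp q.1 * Real.cos q.2, (0:ℝ × ℝ).2 + Real.exp q.1 * Real.sin q.2).1 ^ 2 +
    ((0:ℝ × ℝ).1 + Real.exp q.1 * Real.cos q.2, (0:ℝ × ℝ).2 + Real.exp q.1 * Real.sin q.2).2 ^ 2 =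
    Real.exp q.1 ^ 2 from ?_]
  · exact Real.sqrt_sq (Real.exp_pos _).le
  · simp only [Prod.fst_zero, Prod.snd_zero, zero_add]
    nlinarith [Real.sin_sq_add_cos_sq q.2]

theorem nrm_pos {x : ℝ × ℝ} (hx : x ≠ 0) : 0 < nrm x := by
  refine (nrm_nonneg x).lt_of_ne fun h => hx ?_
  have := nrm_sq x
  rw [← h] at this
  ext
  · simp only [Prod.fst_zero]; nlinarith [sq_nonneg x.1, sq_nonneg x.2]
  · simp only [Prod.snd_zero]; nlinarith [sq_nonneg x.1, sq_nonneg x.2]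

theorem exists_pol {x : ℝ × ℝ} (hx : x ≠ 0) : ∃ q, pol 0 q = x ∧ Real.exp q.1 = nrm x := by
  have hp := nrm_pos hx
  refine ⟨(Real.log (nrm x), Complex.arg ⟨x.1, x.2⟩), ?_, Real.exp_log hp⟩
  have h := nrm_eq x
  unfold pol
  simp only [Real.exp_log hp, Prod.fst_zero, Prod.snd_zero, zero_add]
  rw [h, Complex.norm_mul_cos_arg, Complex.norm_mul_sin_arg]

noncomputable def dpol (q : ℝ × ℝ) : ℝ × ℝ →L[ℝ] ℝ × ℝ :=
  (Matrix.toLin (Module.Basis.finTwoProd ℝ) (Module.Basis.finTwoProd ℝ)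
    !![Real.exp q.1 * Real.cos q.2, -Real.exp q.1 * Real.sin q.2;
       Real.exp q.1 * Real.sin q.2, Real.exp q.1 * Real.cos q.2]).toContinuousLinearMap

theorem hasFDerivAt_pol (q : ℝ × ℝ) : HasFDerivAt (pol 0) (dpol q) q := by
  unfold dpol
  rw [Matrix.toLin_finTwoProd_toContinuousLinearMap]
  have h := (((hasFDerivAt_fst (𝕜 := ℝ) (p := q)).exp.mul
    ((Real.hasDerivAt_cos q.2).comp_hasFDerivAt q hasFDerivAt_snd)).const_add 0).prodMk
    (((hasFDerivAt_fst (𝕜 := ℝ) (p := q)).exp.mul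
    ((Real.hasDerivAt_sin q.2).comp_hasFDerivAt q hasFDerivAt_snd)).const_add 0)
  refine h.congr_fderiv ?_
  ext <;> simp <;> ring

theorem det_dpol (q : ℝ × ℝ) : (dpol q).det = Real.exp (2 * q.1) := by
  unfold dpol
  rw [LinearMap.det_toContinuousLinearMap, LinearMap.det_toLin, Matrix.det_fin_two_of, two_mul, Real.exp_add]
  linear_combination Real.exp q.1 ^ 2 * (Real.sin_sq_add_cos_sq q.2)

theorem pol_inj (y : ℝ × ℝ) : InjOn (pol 0) (dsk y 1) := by
  intro a ha b hb hab
  have h1 : a.1 = b.1 := by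
    apply Real.exp_injective
    rw [← nrm_pol, ← nrm_pol, hab]
  have ha' := dsk_subset y zero_le_one ha
  have hb' := dsk_subset y zero_le_one hb
  have hpi := Real.pi_gt_three
  have e1 := congrArg Prod.fst hab
  have e2 := congrArg Prod.snd hab
  simp only [pol, Prod.fst_zero, Prod.snd_zero, zero_add, h1] at e1 e2
  have e1 := mul_left_cancel₀ (Real.exp_pos _).ne' e1
  have e2 := mul_left_cancel₀ (Real.exp_pos _).ne' e2
  have : Real.cos (a.2 - b.2) = 1 := by
    rw [Real.cos_sub, e1, e2]; nlinarith [Real.sin_sq_add_cos_sq b.2]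
  have h2 := (Real.cos_eq_one_iff_of_lt_of_lt (by linarith [ha'.2.1, hb'.2.2]) (by linarith [ha'.2.2, hb'.2.1])).1 this
  ext
  · exact h1
  · linarith

theorem pol_cov (y : ℝ × ℝ) (g : ℝ × ℝ → ℝ) :
    ∫ x in pol 0 '' (dsk y 1), g x = ∫ q in dsk y 1, Real.exp (2 * q.1) * g (pol 0 q) := by
  rw [integral_image_eq_integral_abs_det_fderiv_smul volume (dsk_open y 1).measurableSet
    (fun q _ => (hasFDerivAt_pol q).hasFDerivWithinAt) (pol_inj y)]
  simp only [det_dpol, abs_of_pos (Real.exp_pos _), smul_eq_mul]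

theorem energy_tail (g : ℝ × ℝ → ℝ) (h0 : ∀ x, 0 ≤ g x) (hg : Integrable g) {ε : ℝ} (hε : 0 < ε) :
    ∃ T : ℝ, ∀ y : ℝ × ℝ, T ≤ y.1 → ∫ q in dsk y 1, Real.exp (2 * q.1) * g (pol 0 q) ≤ ε := by
  have L := tendsto_setIntegral_of_antitone (μ := volume) (f := g) (s := fun k : ℕ => {x : ℝ × ℝ | (k:ℝ) ≤ nrm x})
    (fun k => (isClosed_le continuous_const nrm_cont).measurableSet)
    (fun a b hab x hx => show (a:ℝ) ≤ nrm x from le_trans (Nat.cast_le.2 hab) (show (b:ℝ) ≤ nrm x from hx)) ⟨0, hg.integrableOn⟩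
  have B : ⋂ k : ℕ, {x : ℝ × ℝ | (k:ℝ) ≤ nrm x} = ∅ := by
    apply eq_empty_of_forall_notMem (fun x ↦ ?_)
    simpa only [mem_iInter, mem_ofPred_eq, not_forall, not_le] using exists_nat_gt (nrm x)
  simp only [B, Measure.restrict_empty, integral_zero_measure] at L
  obtain ⟨k, hk⟩ := (L.eventually (gt_mem_nhds hε)).exists
  refine ⟨k + 1, fun y hy => ?_⟩
  rw [← pol_cov]
  refine le_trans (setIntegral_mono_set hg.integrableOn (Filter.Eventually.of_forall h0) ?_) hk.le
  refine Filter.Eventually.of_forall ?_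
  rintro _ ⟨q, hq, rfl⟩
  show (k:ℝ) ≤ nrm (pol 0 q)
  rw [nrm_pol]
  have := (dsk_subset y zero_le_one hq).1.1
  linarith [Real.add_one_le_exp q.1]

theorem sol_decay {n : ℕ} (A : Matrix (Fin n) (Fin n) ℝ) (β : Fin n → ℝ)
    (hA : H1 A) (u : Fin n → ℝ × ℝ → ℝ) (hu : PDESolution A β u) :
    ∀ i, ∃ C δ T : ℝ, 0 < δ ∧ ∀ x : ℝ × ℝ, x ≠ 0 → T ≤ Real.log (nrm x) →
      nrm x ^ 2 * (nrm x ^ β i * Real.exp (u i x)) ≤ Real.exp (C - δ * Real.log (nrm x)) := by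
  obtain ⟨hc, h2, hl, hi⟩ := hu
  have hpn : ∀ q, pol 0 q ≠ 0 := pol_ne 0
  have hexp : ∀ j q, Real.exp (u j (pol 0 q) + ((2 + β j) * q.1 + 0)) =
      Real.exp (2 * q.1) * (nrm (pol 0 q) ^ β j * Real.exp (u j (pol 0 q))) := by
    intro j q
    rw [nrm_pol, ← Real.exp_mul, ← Real.exp_add, ← Real.exp_add]
    congr 1; ring
  have hup : ∀ j, ContDiff ℝ 2 (fun q => u j (pol 0 q)) := fun j => by
    rw [contDiff_iff_contDiffAt]
    intro q
    exact (h2 j _ (hpn q)).comp q (contDiff_pol (k := 2) 0).contDiffAt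
  have hlin : ∀ j, ContDiff ℝ 2 (fun q : ℝ × ℝ => (2 + β j) * q.1 + 0) := fun j => by fun_prop
  have D := decay A hA.2.1 ?_ (fun j q => u j (pol 0 q) + ((2 + β j) * q.1 + 0))
    (fun j => (hup j).add (hlin j)) ?_ ?_ ?_
  · intro i
    obtain ⟨C, δ, T, hδ, h⟩ := D i
    refine ⟨C, δ, T, hδ, fun x hx hT => ?_⟩
    obtain ⟨q, rfl, hq⟩ := exists_pol hx
    rw [← hq, Real.log_exp] at hT
    rw [← hq, Real.log_exp]
    have := Real.exp_le_exp.2 (h q hT)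
    rw [hexp] at this
    rw [← hq] at this
    refine le_trans (le_of_eq ?_) this
    rw [two_mul, Real.exp_add]; ring
  · intro i
    by_contra! h
    exact hA.2.2.2.ne_zero (Matrix.det_eq_zero_of_row_eq_zero i h)
  · intro i t θ
    simp [pol]
  · intro i q
    rw [lap_add (hup i).contDiffAt (hlin i).contDiffAt, lap_affine, lap_pol (h2 i _ (hpn q))]
    simp only [hexp]
    have := hl i _ (hpn q)
    rw [eq_neg_of_add_eq_zero_left this, add_zero, mul_neg, Finset.mul_sum]
    congr 1
    apply Finset.sum_congr rfl
    intro j _; ring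
  · intro ε hε
    have : ∀ j, ∃ T : ℝ, ∀ y : ℝ × ℝ, T ≤ y.1 →
        ∫ x in dsk y 1, Real.exp (u j (pol 0 x) + ((2 + β j) * x.1 + 0)) ≤ ε := by
      intro j
      simp only [hexp]
      exact energy_tail (fun x => nrm x ^ β j * Real.exp (u j x))
        (fun x => mul_nonneg (Real.rpow_nonneg (nrm_nonneg x) _) (Real.exp_pos _).le) (hi j) hε
    choose T hT using this
    refine ⟨∑ j, |T j|, fun y hy j => hT j y (le_trans ?_ hy)⟩
    exact (le_abs_self _).trans (Finset.single_le_sum (f := fun j => |T j|) (fun j _ => abs_nonneg _) (Finset.mem_univ j))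

open scoped Topology

noncomputable def ff (x : ℝ × ℝ) : ℝ := Real.log (Real.log (nrm x + 3))

theorem log_gt_one {r : ℝ} (hr : 0 ≤ r) : 1 < Real.log (r + 3) := by
  rw [Real.lt_log_iff_exp_lt (by linarith)]
  linarith [Real.exp_one_lt_d9]

theorem ff_pos (x : ℝ × ℝ) : 0 < ff x := Real.log_pos (log_gt_one (nrm_nonneg x))

theorem ff_cont : Continuous ff := by
  unfold ff
  have h := nrm_cont
  refine Continuous.log (Continuous.log (by fun_prop) fun x => ?_) fun x => ?_
  · linarith [nrm_nonneg x]
  · linarith [log_gt_one (nrm_nonneg x)]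

theorem ff_contDiffAt {x : ℝ × ℝ} (hx : x ≠ 0) : ContDiffAt ℝ 2 ff x := by
  have hp := nrm_pos hx
  have h1 : ContDiffAt ℝ 2 nrm x := by
    unfold nrm
    refine ContDiffAt.sqrt (by fun_prop) ?_
    rw [← nrm_sq]; positivity
  unfold ff
  refine ContDiffAt.log (ContDiffAt.log (h1.add contDiffAt_const) ?_) ?_
  · linarith
  · linarith [log_gt_one hp.le]

noncomputable def lf (x : ℝ × ℝ) : ℝ :=
  (3 * Real.log (nrm x + 3) - nrm x) / (nrm x * (nrm x + 3) ^ 2 * Real.log (nrm x + 3) ^ 2)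

theorem lap_ff {x : ℝ × ℝ} (hx : x ≠ 0) : lap ff x = lf x := by
  obtain ⟨q, rfl, hq⟩ := exists_pol hx
  have h := lap_pol (ff_contDiffAt hx)
  have hE := Real.exp_pos q.1
  have hd : ∀ t : ℝ, HasDerivAt (fun s => Real.log (Real.log (Real.exp s + 3)))
      (Real.exp t / (Real.exp t + 3) / Real.log (Real.exp t + 3)) t := by
    intro t
    have ht := Real.exp_pos t
    exact (((Real.hasDerivAt_exp t).add_const 3).log (by positivity)).log
      (by linarith [log_gt_one ht.le])
  have hd1 : deriv (fun s => Real.log (Real.log (Real.exp s + 3))) =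
      fun t => Real.exp t / (Real.exp t + 3) / Real.log (Real.exp t + 3) := funext fun t => (hd t).deriv
  have hL := log_gt_one hE.le
  have hd2 := (((Real.hasDerivAt_exp q.1).div ((Real.hasDerivAt_exp q.1).add_const 3) (by positivity)).div
    (((Real.hasDerivAt_exp q.1).add_const 3).log (by positivity)) (by linarith)).deriv
  have hh : lap (fun p => ff (pol 0 p)) q = deriv (fun t => Real.exp t / (Real.exp t + 3) / Real.log (Real.exp t + 3)) q.1 := by
    simp only [lap, ff, nrm_pol, hd1]
    simp
  rw [hh] at h
  have hd2' : deriv (fun t => Real.exp t / (Real.exp t + 3) / Real.log (Real.exp t + 3)) q.1 = _ := hd2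
  rw [hd2', two_mul, Real.exp_add] at h
  unfold lf
  rw [← hq]
  have hL0 : Real.log (Real.exp q.1 + 3) ≠ 0 := by linarith
  have : Real.exp q.1 * Real.exp q.1 ≠ 0 := by positivity
  apply mul_left_cancel₀ this
  rw [← h, Pi.div_apply]
  field_simp
  ring

theorem lf_cont {x : ℝ × ℝ} (hx : x ≠ 0) : ContinuousAt lf x := by
  have hp := nrm_pos hx
  have hL := log_gt_one hp.le
  have h := nrm_cont.continuousAt (x := x)
  have hl : ContinuousAt (fun x => Real.log (nrm x + 3)) x :=
    ContinuousAt.log (by fun_prop) (by linarith)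
  unfold lf
  refine ContinuousAt.div (by fun_prop) (by fun_prop) ?_
  positivity

theorem poly_exp (C δ : ℝ) (hδ : 0 < δ) :
    Filter.Tendsto (fun t : ℝ => Real.exp (C - δ * t) * (8 * t ^ 3)) Filter.atTop (𝓝 0) := by
  have h := (Real.tendsto_pow_mul_exp_neg_atTop_nhds_zero 3).comp
    (Filter.tendsto_id.const_mul_atTop hδ)
  have h2 := h.const_mul (8 * Real.exp C / δ ^ 3)
  rw [mul_zero] at h2
  refine h2.congr fun t => ?_
  simp only [Function.comp, id]
  rw [sub_eq_add_neg, Real.exp_add]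
  field_simp

theorem good_R {n : ℕ} (A : Matrix (Fin n) (Fin n) ℝ) (hA0 : ∀ i j, 0 ≤ A i j)
    (V : Fin n → ℝ × ℝ → ℝ)
    (hV : ∀ i, ∃ C δ T : ℝ, 0 < δ ∧ ∀ x : ℝ × ℝ, x ≠ 0 → T ≤ Real.log (nrm x) →
      nrm x ^ 2 * V i x ≤ Real.exp (C - δ * Real.log (nrm x))) :
    ∃ R > 0, ∀ x : ℝ × ℝ, R ≤ nrm x → ∀ i, (∑ j, A i j * V j x) * ff x + lf x < 0 := by
  choose C δ T hδ hV using hV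
  have e1 : ∀ᶠ r : ℝ in Filter.atTop, ∀ i,
      ∑ j, A i j * (Real.exp (C j - δ j * Real.log r) * (8 * Real.log r ^ 3)) < 1 / 8 := by
    rw [Filter.eventually_all]
    intro i
    have : Filter.Tendsto (fun t : ℝ => ∑ j, A i j * (Real.exp (C j - δ j * t) * (8 * t ^ 3)))
        Filter.atTop (𝓝 (∑ j, A i j * 0)) :=
      tendsto_finsetSum _ fun j _ => (poly_exp (C j) (δ j) (hδ j)).const_mul _
    simp only [mul_zero, Finset.sum_const_zero] at this
    exact (this.comp Real.tendsto_log_atTop).eventually (gt_mem_nhds (by norm_num))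
  have e2 : ∀ᶠ r : ℝ in Filter.atTop, ∀ j, T j ≤ Real.log r := by
    rw [Filter.eventually_all]
    intro j
    exact Real.tendsto_log_atTop.eventually (Filter.eventually_ge_atTop _)
  have e3 : ∀ᶠ r : ℝ in Filter.atTop, 12 * Real.log r ≤ r := by
    have := Real.isLittleO_log_id_atTop.bound (show (0:ℝ) < 1 / 12 by norm_num)
    filter_upwards [this, Filter.eventually_ge_atTop 1] with r h h1
    rw [Real.norm_of_nonneg (Real.log_nonneg h1), id, Real.norm_of_nonneg (by linarith)] at h
    linarith
  obtain ⟨R, hR⟩ := Filter.eventually_atTop.1 (e1.and (e2.and e3))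
  refine ⟨max R 3, by positivity, fun x hx i => ?_⟩
  obtain ⟨h1, h2, h3⟩ := hR _ ((le_max_left _ _).trans hx)
  have hr3 : 3 ≤ nrm x := (le_max_right _ _).trans hx
  have hx0 : x ≠ 0 := by
    rintro rfl
    norm_num [nrm] at hr3
  set r := nrm x with hr
  have hL1 := log_gt_one (nrm_nonneg x)
  rw [← hr] at hL1
  have hL2 : Real.log (r + 3) ≤ 2 * Real.log r := by
    have : Real.log (r + 3) ≤ Real.log (r ^ 2) := Real.log_le_log (by linarith) (by nlinarith)
    rw [Real.log_pow] at this
    exact_mod_cast this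
  have hf0 := ff_pos x
  have hfL : ff x ≤ Real.log (r + 3) := by
    unfold ff
    rw [← hr]
    linarith [Real.log_le_sub_one_of_pos (show 0 < Real.log (r + 3) by linarith)]
  set L := Real.log (r + 3) with hL
  have hlf : lf x ≤ -(1 / 8) / (r ^ 2 * L ^ 2) := by
    unfold lf
    rw [← hr, ← hL, div_le_div_iff₀ (by positivity) (by positivity)]
    have a1 : 3 * L - r ≤ -(r / 2) := by linarith
    have a2 : (r + 3) ^ 2 ≤ 4 * r ^ 2 := by nlinarith
    have p : 0 < r ^ 2 * L ^ 2 := by positivity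
    have p2 : 0 < r * L ^ 2 := by positivity
    calc (3 * L - r) * (r ^ 2 * L ^ 2) ≤ -(r / 2) * (r ^ 2 * L ^ 2) := by gcongr
      _ = -(1 / 8) * (4 * r ^ 2) * (r * L ^ 2) := by ring
      _ ≤ -(1 / 8) * (r + 3) ^ 2 * (r * L ^ 2) := by
        apply mul_le_mul_of_nonneg_right _ p2.le
        linarith
      _ = _ := by ring
  have hcub : ff x * L ^ 2 ≤ 8 * Real.log r ^ 3 := by
    calc ff x * L ^ 2 ≤ L * L ^ 2 := by gcongr
      _ = L ^ 3 := by ring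
      _ ≤ (2 * Real.log r) ^ 3 := by gcongr
      _ = _ := by ring
  have hP : 0 < r ^ 2 * L ^ 2 := by positivity
  have hsum : (∑ j, A i j * V j x) * ff x * (r ^ 2 * L ^ 2) < 1 / 8 := by
    refine lt_of_le_of_lt ?_ (h1 i)
    rw [mul_assoc, Finset.sum_mul]
    apply Finset.sum_le_sum
    intro j _
    have := hV j x hx0 (h2 j)
    rw [← hr] at this
    calc A i j * V j x * (ff x * (r ^ 2 * L ^ 2)) = A i j * (r ^ 2 * V j x * (ff x * L ^ 2)) := by ring
      _ ≤ A i j * (Real.exp (C j - δ j * Real.log r) * (ff x * L ^ 2)) := by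
        apply mul_le_mul_of_nonneg_left _ (hA0 i j)
        exact mul_le_mul_of_nonneg_right this (by positivity)
      _ ≤ _ := by
        apply mul_le_mul_of_nonneg_left _ (hA0 i j)
        exact mul_le_mul_of_nonneg_left hcub (Real.exp_pos _).le
  have : (∑ j, A i j * V j x) * ff x < (1 / 8) / (r ^ 2 * L ^ 2) := by
    rwa [lt_div_iff₀ hP]
  have : -(1 / 8) / (r ^ 2 * L ^ 2) = -((1 / 8) / (r ^ 2 * L ^ 2)) := by ring
  linarith

open scoped Topology

theorem negative_minimum_in_bounded_region {n : ℕ} (hn : 0 < n)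
    (A : Matrix (Fin n) (Fin n) ℝ) (β : Fin n → ℝ)
    (hA : H1 A) (hβ : ∀ i, -2 < β i ∧ β i ≤ 0) (hβ0 : ∃ i, β i ≠ 0)
    (u : Fin n → ℝ × ℝ → ℝ) (hu : PDESolution A β u) :
    ∃ R > (0:ℝ), ∀ ℓ > (0:ℝ), ∀ x₀ : ℝ × ℝ, ℓ < x₀.1 →
      (∃ i,
        (u i (2 * ℓ - x₀.1, x₀.2) - u i x₀) / Real.log (Real.log (nrm x₀ + 3)) < 0 ∧
        ∀ x : ℝ × ℝ, ℓ < x.1 → ∀ j,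
          (u i (2 * ℓ - x₀.1, x₀.2) - u i x₀) / Real.log (Real.log (nrm x₀ + 3)) ≤
          (u j (2 * ℓ - x.1, x.2) - u j x) / Real.log (Real.log (nrm x + 3))) →
      nrm x₀ < R := by
  obtain ⟨R, hR, hgood⟩ := good_R A hA.2.1 (fun j x => nrm x ^ β j * Real.exp (u j x))
    (sol_decay A β hA u hu)
  refine ⟨R, hR, fun ℓ hℓ x₀ hx₀ ⟨i, hneg, hmin⟩ => ?_⟩
  by_contra! hcon
  have hG := hgood x₀ hcon i
  obtain ⟨hc, h2, hl, -⟩ := hu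
  have hA0 := hA.2.1
  set z : ℝ := (u i (2 * ℓ - x₀.1, x₀.2) - u i x₀) / Real.log (Real.log (nrm x₀ + 3)) with hz
  have hw : ∀ x : ℝ × ℝ, ℓ < x.1 → ∀ j, z * ff x ≤ u j (2 * ℓ - x.1, x.2) - u j x := fun x hx j =>
    (le_div_iff₀ (ff_pos x)).1 (hmin x hx j)
  have hne : ∀ x : ℝ × ℝ, ℓ < x.1 → x ≠ 0 := by
    rintro x hx rfl
    simp only [Prod.fst_zero] at hx
    linarith
  have hx00 := hne x₀ hx₀
  set Q : ℝ × ℝ → ℝ := fun x => ∑ j, A i j * (nrm x ^ β j *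
    (Real.exp (u j x) - Real.exp (u j (2 * ℓ - x.1, x.2)))) - z * lf x with hQ
  have hrefl : ∀ j, Continuous fun x : ℝ × ℝ => u j (2 * ℓ - x.1, x.2) := fun j =>
    (hc j).comp (by fun_prop)
  have hQc : ContinuousAt Q x₀ := by
    rw [hQ]
    refine ContinuousAt.sub ?_ (continuousAt_const.mul (lf_cont hx00))
    refine tendsto_finsetSum _ fun j _ => ?_
    refine ContinuousAt.mul continuousAt_const (ContinuousAt.mul ?_ ?_)
    · exact nrm_cont.continuousAt.rpow_const (Or.inl (nrm_pos hx00).ne')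
    · exact ((hc j).rexp.sub (hrefl j).rexp).continuousAt
  have hQ0 : Q x₀ < 0 := by
    have h1 : Q x₀ ≤ ∑ j, A i j * (nrm x₀ ^ β j * (Real.exp (u j x₀) * (-z * ff x₀))) - z * lf x₀ := by
      simp only [hQ]
      gcongr with j _
      · exact hA0 i j
      · exact Real.rpow_nonneg (nrm_nonneg _) _
      · have h3 := hw x₀ hx₀ j
        set a := u j x₀
        set b := u j (2 * ℓ - x₀.1, x₀.2)
        have h4 : Real.exp b = Real.exp a * Real.exp (b - a) := by rw [← Real.exp_add]; congr 1; ring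
        rw [h4]
        have h5 := Real.add_one_le_exp (b - a)
        nlinarith [Real.exp_pos a]
    have h2 : ∑ j, A i j * (nrm x₀ ^ β j * (Real.exp (u j x₀) * (-z * ff x₀))) - z * lf x₀ =
        -z * ((∑ j, A i j * (nrm x₀ ^ β j * Real.exp (u j x₀))) * ff x₀ + lf x₀) := by
      rw [mul_add, Finset.sum_mul, Finset.mul_sum]
      have : ∀ a b c : ℝ, a = b → a - z * c = b + -z * c := by rintro a b c rfl; ring
      apply this
      apply Finset.sum_congr rfl
      intro j _; ring
    rw [h2] at h1
    nlinarith
  refine removable (g := fun x => u i (2 * ℓ - x.1, x.2) - u i x - z * ff x) (x₀ := x₀)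
    (c := -(Q x₀) / 2) (by linarith) ?_ ?_
  · have e1 : ∀ᶠ x in 𝓝 x₀, Q x < Q x₀ / 2 := hQc.eventually (gt_mem_nhds (by linarith))
    have e2 : ∀ᶠ x : ℝ × ℝ in 𝓝 x₀, ℓ < x.1 := continuous_fst.continuousAt.eventually (lt_mem_nhds hx₀)
    have e3 : ∀ᶠ x : ℝ × ℝ in 𝓝 x₀, x ≠ x₀ → x ≠ (2 * ℓ, 0) := by
      by_cases h : x₀ = (2 * ℓ, 0)
      · rw [h]; exact Filter.Eventually.of_forall fun _ h => h
      · filter_upwards [isOpen_ne.mem_nhds h] with x hx _ using hx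
    filter_upwards [e1, e2, e3] with x h1 hx h3
    refine ⟨?_, ?_, fun hxx => ?_⟩
    · exact (((hrefl i).sub (hc i)).sub (continuous_const.mul ff_cont)).continuousAt
    · linarith [hw x hx i]
    · have hx0 := hne x hx
      have hxr : ((2 * ℓ - x.1, x.2) : ℝ × ℝ) ≠ 0 := by
        intro h
        apply h3 hxx
        have a := congrArg Prod.fst h
        have b := congrArg Prod.snd h
        simp only [Prod.fst_zero, Prod.snd_zero] at a b
        ext
        · simp only; linarith
        · exact b
      have c1 : ContDiffAt ℝ 2 (fun x : ℝ × ℝ => u i (2 * ℓ - x.1, x.2)) x :=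
        (h2 i _ hxr).comp (f := fun x : ℝ × ℝ => (2 * ℓ - x.1, x.2)) x (by fun_prop)
      have c2 := h2 i x hx0
      have c3 : ContDiffAt ℝ 2 (fun x => z * ff x) x := contDiffAt_const.mul (ff_contDiffAt hx0)
      refine ⟨(c1.sub c2).sub c3, ?_⟩
      rw [lap_sub (c1.sub c2) c3, lap_sub c1 c2, lap_refl, lap_const_mul, lap_ff hx0]
      have l1 := hl i x hx0
      have l2 := hl i _ hxr
      refine lt_of_le_of_lt ?_ (show Q x < -(-(Q x₀) / 2) by linarith)
      have hs : ∑ j, A i j * (nrm x ^ β j * (Real.exp (u j x) - Real.exp (u j (2 * ℓ - x.1, x.2)))) ≥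
          ∑ j, A i j * nrm x ^ β j * Real.exp (u j x) -
          ∑ j, A i j * nrm (2 * ℓ - x.1, x.2) ^ β j * Real.exp (u j (2 * ℓ - x.1, x.2)) := by
        rw [← Finset.sum_sub_distrib]
        apply Finset.sum_le_sum
        intro j _
        have hnn : nrm (2 * ℓ - x.1, x.2) ≤ nrm x := by
          unfold nrm
          apply Real.sqrt_le_sqrt
          simp only
          nlinarith
        have hp := Real.rpow_le_rpow_of_nonpos (nrm_pos hxr) hnn (hβ j).2
        have := mul_le_mul_of_nonneg_left (mul_le_mul_of_nonneg_right hp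
          (Real.exp_pos (u j (2 * ℓ - x.1, x.2))).le) (hA0 i j)
        linarith
      simp only [hQ]
      linarith
  · have : z * ff x₀ = u i (2 * ℓ - x₀.1, x₀.2) - u i x₀ := div_mul_cancel₀ _ (ff_pos x₀).ne'
    simp only [this, sub_self]
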